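/- Let F be an algebraically closed field, let A be a finite-dimensional Hopf algebra over F, and let V be a finite-dimensional (left) A-module. For k ≥ 0, let V^{⊗k} denote the k-fold tensor power of V, made into an A-module inductively by V^{⊗0} := ε (the field F with A acting through the counit) and V^{⊗(k+1)} := V^{⊗k} ⊗_F V with the A-module structure obtained by restricting the natural (A ⊗_F A)-module structure along the comultiplication Δ : A → A ⊗_F A. If the intersection ⋂_{k ≥ 0} Ann_A(V^{⊗k}) of the annihilator ideals of all tensor powers of V is the zero ideal, then V is tensor-rich: every simple A-module S is a composition factor of V^{⊗k} for some k (i.e., there exist A-submodules N ⊆ M ⊆ V^{⊗k} with M/N ≅ S). -/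

import Mathlib

/-- The carrier of the `n`-th tensor power of an `F`-vector space `V`:
`V^{⊗0} = F` and `V^{⊗(n+1)} = V^{⊗n} ⊗[F] V`. -/
noncomputable def hopfTensorPow (F : Type) [Field F] (V : Type) [AddCommGroup V]
    [Module F V] : ℕ → ModuleCat F
  | 0 => ModuleCat.of F F
  | n + 1 => ModuleCat.of F (TensorProduct F (hopfTensorPow F V n) V)

/-- The representation of the Hopf algebra `A` on the `n`-th tensor power of an
`A`-module `V`: on `V^{⊗0} = F` the algebra `A` acts through the counit, and on
`V^{⊗(n+1)} = V^{⊗n} ⊗[F] V` it acts by restricting the natural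
`(A ⊗[F] A)`-action (factorwise) along the comultiplication `Δ : A → A ⊗[F] A`. -/
noncomputable def hopfTensorPowRep (F : Type) [Field F] (A : Type) [Ring A]
    [HopfAlgebra F A] (V : Type) [AddCommGroup V] [Module F V] [Module A V]
    [IsScalarTower F A V] :
    (n : ℕ) → (A →ₐ[F] Module.End F (hopfTensorPow F V n))
  | 0 => (Algebra.ofId F (Module.End F (hopfTensorPow F V 0))).comp
      (Bialgebra.counitAlgHom F A)
  | n + 1 =>
    (((Module.endTensorEndAlgHom (R := F) (S := F) (A := F)
            (M := hopfTensorPow F V n) (N := V)).comp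
        (Algebra.TensorProduct.map (hopfTensorPowRep F A V n) (Algebra.lsmul F F V))).comp
      (Bialgebra.comulAlgHom F A))

/-- The `A`-module structure coming from a representation
`ρ : A →ₐ[F] End_F(X)`. -/
noncomputable def moduleOfRep {F A X : Type*} [CommSemiring F] [Semiring A] [Algebra F A]
    [AddCommMonoid X] [Module F X] (ρ : A →ₐ[F] Module.End F X) : Module A X :=
  Module.compHom X ρ.toRingHom

theorem hopfAux_single {A : Type} [Ring A] {S X M : Type} [AddCommGroup S] [Module A S]
    [AddCommGroup X] [Module A X] [AddCommGroup M] [Module A M] [IsSimpleModule A S]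
    (g : M →ₗ[A] X) (f : M →ₗ[A] S) (hk : LinearMap.ker g ≤ LinearMap.ker f) (hf : f ≠ 0) :
    ∃ N M : Submodule A X, N ≤ M ∧
      Nonempty ((↥M ⧸ Submodule.comap M.subtype N) ≃ₗ[A] S) := by
  let h : LinearMap.range g →ₗ[A] S :=
    ((LinearMap.ker g).liftQ f hk).comp g.quotKerEquivRange.symm.toLinearMap
  have hs : Function.Surjective h := by
    have hfs : Function.Surjective f := LinearMap.surjective_of_ne_zero hf
    intro s
    obtain ⟨m, rfl⟩ := hfs s
    refine ⟨g.quotKerEquivRange (Submodule.Quotient.mk m), ?_⟩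
    simp only [h, LinearMap.comp_apply, LinearEquiv.coe_coe, LinearEquiv.symm_apply_apply]
    exact Submodule.liftQ_apply _ _ _
  refine ⟨(LinearMap.ker h).map (LinearMap.range g).subtype, LinearMap.range g,
    Submodule.map_subtype_le _ _, ?_⟩
  rw [Submodule.comap_map_eq_of_injective (Submodule.subtype_injective _)]
  exact ⟨h.quotKerEquivOfSurjective hs⟩

theorem hopfAux_finset {A : Type} [Ring A] {S : Type} [AddCommGroup S] [Module A S]
    [IsSimpleModule A S] {ι : Type} (X : ι → Type) [∀ i, AddCommGroup (X i)]
    [∀ i, Module A (X i)] (t : Finset ι) :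
    ∀ (M : Type) [AddCommGroup M] [Module A M] (g : ∀ i, M →ₗ[A] X i) (f : M →ₗ[A] S)
      (_ : ∀ m, (∀ i ∈ t, g i m = 0) → f m = 0) (_ : f ≠ 0),
    ∃ i, ∃ N M : Submodule A (X i), N ≤ M ∧
      Nonempty ((↥M ⧸ Submodule.comap M.subtype N) ≃ₗ[A] S) := by
  classical
  induction t using Finset.induction_on with
  | empty =>
    intro M _ _ g f hk hf
    exact absurd (LinearMap.ext fun m => hk m (by simp)) hf
  | insert j t hj ih =>
    intro M _ _ g f hk hf
    by_cases h0 : f.comp (LinearMap.ker (g j)).subtype = 0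
    · refine ⟨j, hopfAux_single (g j) f ?_ hf⟩
      intro m hm
      exact LinearMap.congr_fun h0 ⟨m, hm⟩
    · refine ih (LinearMap.ker (g j)) (fun i => (g i).comp (LinearMap.ker (g j)).subtype)
        (f.comp (LinearMap.ker (g j)).subtype) ?_ h0
      intro m hm
      refine hk m ?_
      intro i hi
      rcases Finset.mem_insert.1 hi with rfl | hi
      · exact m.2
      · exact hm i hi

theorem hopfAux_family {A : Type} [Ring A] [IsArtinian A A] {S : Type} [AddCommGroup S]
    [Module A S] [IsSimpleModule A S] (W : ℕ → Type) [∀ i, AddCommGroup (W i)]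
    [∀ i, Module A (W i)] (hW : ∀ a : A, (∀ n, ∀ w : W n, a • w = 0) → a = 0) :
    ∃ i, ∃ N M : Submodule A (W i), N ≤ M ∧
      Nonempty ((↥M ⧸ Submodule.comap M.subtype N) ≃ₗ[A] S) := by
  classical
  let g : ∀ p : (Σ n, W n), A →ₗ[A] W p.1 := fun p => LinearMap.toSpanSingleton A _ p.2
  obtain ⟨t, ht⟩ := Finset.exists_inf_le (fun p => LinearMap.ker (g p))
  haveI := IsSimpleModule.nontrivial A S
  obtain ⟨s, hs⟩ := exists_ne (0 : S)
  obtain ⟨i, hi⟩ := hopfAux_finset (S := S) (fun p : (Σ n, W n) => W p.1) t A g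
    (LinearMap.toSpanSingleton A S s) (by
      intro a ha
      have : a = 0 := by
        refine hW a fun n w => ?_
        have h1 : a ∈ t.inf (fun p => LinearMap.ker (g p)) := by
          rw [Submodule.mem_finsetInf]
          exact ha
        exact ht ⟨n, w⟩ h1
      simp [this]) (by
      intro h
      apply hs
      simpa using LinearMap.congr_fun h 1)
  exact ⟨i.1, hi⟩

/-- Theorem 6.8(iii) of the paper. Let `A` be a
finite-dimensional Hopf algebra over an algebraically closed field `F` and `V`
a finite-dimensional `A`-module. If the intersection of the annihilators of all
tensor powers `V^{⊗n}` is the zero ideal, then `V` is tensor-rich: every simple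
`A`-module `S` is a composition factor of some `V^{⊗n}`. -/
theorem stmt18 (F : Type) [Field F] [IsAlgClosed F]
    (A : Type) [Ring A] [HopfAlgebra F A] [FiniteDimensional F A]
    (V : Type) [AddCommGroup V] [Module F V] [Module A V] [IsScalarTower F A V]
    [FiniteDimensional F V]
    (hann : ⋂ n : ℕ, {a : A | hopfTensorPowRep F A V n a = 0} = {0}) :
    ∀ (S : Type) [AddCommGroup S] [Module A S], IsSimpleModule A S →
      ∃ n : ℕ,
        letI : Module A (hopfTensorPow F V n) := moduleOfRep (hopfTensorPowRep F A V n)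
        ∃ N M : Submodule A (hopfTensorPow F V n), N ≤ M ∧
          Nonempty ((↥M ⧸ Submodule.comap M.subtype N) ≃ₗ[A] S) := by
  intro S _ _ hS
  haveI : IsArtinian A A := isArtinian_of_tower F inferInstance
  letI (n : ℕ) : Module A (hopfTensorPow F V n) := moduleOfRep (hopfTensorPowRep F A V n)
  refine hopfAux_family (A := A) (S := S) (fun n => hopfTensorPow F V n) ?_
  intro a ha
  have h : a ∈ ⋂ n : ℕ, {a : A | hopfTensorPowRep F A V n a = 0} := by
    refine Set.mem_iInter.2 fun n => ?_
    exact LinearMap.ext fun w => ha n w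
  rw [hann] at h
  exact h
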